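/- Let q, x, y, z be complex numbers with |q| < 1 and |y| < 1, and define H(x,y,z) = Σ_{n=0}^∞ Σ_{c=0}^n (x;q)_n · y^n · q^{c²+c} · z^{2c} · [n choose c]_q (an absolutely convergent series). Then (x·y − q·z²)·H(x, q·y, z) + (1 − y)·H(x, y, z) = −q⁴·(1−x)·y·z⁴·H(q·x, q·y, q·z) + 1 − q·z². -/

import Mathlib

/-- The finite q-Pochhammer symbol `(x;q)_n = ∏_{i=1}^n (1 - x q^{i-1})`. -/
noncomputable def qPoch (q x : ℂ) (n : ℕ) : ℂ := ∏ i ∈ Finset.range n, (1 - x * q ^ i)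

/-- The Gaussian binomial coefficient `[n choose c]_q`. -/
noncomputable def qBinom (q : ℂ) (n c : ℕ) : ℂ :=
  if c ≤ n then qPoch q q n / (qPoch q q c * qPoch q q (n - c)) else 0

/-- `H(x,y,z) = Σ_{n=0}^∞ Σ_{c=0}^n (x;q)_n y^n q^{c²+c} z^{2c} [n choose c]_q`. -/
noncomputable def Hfun (q X Y Z : ℂ) : ℂ :=
  ∑' n : ℕ, ∑ c ∈ Finset.range (n + 1),
    qPoch q X n * Y ^ n * q ^ (c ^ 2 + c) * Z ^ (2 * c) * qBinom q n c

lemma qPoch_succ (q x : ℂ) (n : ℕ) : qPoch q x (n + 1) = qPoch q x n * (1 - x * q ^ n) := by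
  simp [qPoch, Finset.prod_range_succ]

lemma qPoch_succ_left (q x : ℂ) (n : ℕ) :
    qPoch q x (n + 1) = (1 - x) * qPoch q (q * x) n := by
  simp only [qPoch, Finset.prod_range_succ']
  rw [mul_comm]
  congr 1
  · simp
  · apply Finset.prod_congr rfl
    intro i _
    ring

lemma one_sub_ne (q : ℂ) (hq : ‖q‖ < 1) (n : ℕ) : 1 - q * q ^ n ≠ 0 := by
  intro h
  have h1 : q ^ (n + 1) = 1 := by rw [pow_succ]; linear_combination -h
  have h2 : ‖q‖ ^ (n + 1) < 1 := pow_lt_one₀ (norm_nonneg _) hq (by omega)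
  rw [← norm_pow, h1] at h2
  simp at h2

lemma qPoch_ne (q : ℂ) (hq : ‖q‖ < 1) (n : ℕ) : qPoch q q n ≠ 0 :=
  Finset.prod_ne_zero_iff.2 fun i _ => one_sub_ne q hq i

lemma qBinom_self (q : ℂ) (hq : ‖q‖ < 1) (n : ℕ) : qBinom q n n = 1 := by
  have := qPoch_ne q hq n
  simp [qBinom]
  rw [show qPoch q q 0 = 1 by simp [qPoch]]
  field_simp

lemma qBinom_zero (q : ℂ) (hq : ‖q‖ < 1) (n : ℕ) : qBinom q n 0 = 1 := by
  have := qPoch_ne q hq n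
  simp [qBinom]
  rw [show qPoch q q 0 = 1 by simp [qPoch]]
  field_simp

lemma qBinom_big (q : ℂ) (n c : ℕ) (h : n < c) : qBinom q n c = 0 := by
  simp [qBinom, h]

lemma qBinom_add (q : ℂ) (c d : ℕ) :
    qBinom q (c + d) c = qPoch q q (c + d) / (qPoch q q c * qPoch q q d) := by
  simp [qBinom]

lemma pascal1 (q : ℂ) (hq : ‖q‖ < 1) (n c : ℕ) (h : c ≤ n) :
    qBinom q (n + 1) (c + 1) = qBinom q n (c + 1) + q ^ (n - c) * qBinom q n c := by
  obtain ⟨d, rfl⟩ := Nat.exists_eq_add_of_le h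
  rcases d with _ | d
  · simp [qBinom_self q hq, qBinom_big]
  · have e1 : c + (d + 1) + 1 = (c + 1) + (d + 1) := by ring
    have e2 : qBinom q (c + (d + 1)) (c + 1) = qBinom q ((c + 1) + d) (c + 1) := by
      congr 1; ring
    rw [e1, e2, qBinom_add, qBinom_add, qBinom_add]
    have e3 : c + 1 + (d + 1) = (c + d + 1) + 1 := by ring
    have e4 : c + 1 + d = c + d + 1 := by ring
    have e5 : c + (d + 1) = c + d + 1 := by ring
    have e6 : c + d + 1 - c = d + 1 := by omega
    rw [e3, e4, e5, e6, qPoch_succ q q (c + d + 1), qPoch_succ q q c, qPoch_succ q q d]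
    have h1 := qPoch_ne q hq c
    have h2 := qPoch_ne q hq d
    have h3 := one_sub_ne q hq c
    have h4 := one_sub_ne q hq d
    field_simp
    ring

lemma pascal2 (q : ℂ) (hq : ‖q‖ < 1) (n c : ℕ) (h : c ≤ n) :
    qBinom q (n + 1) (c + 1) = q ^ (c + 1) * qBinom q n (c + 1) + qBinom q n c := by
  obtain ⟨d, rfl⟩ := Nat.exists_eq_add_of_le h
  rcases d with _ | d
  · simp [qBinom_self q hq, qBinom_big]
  · have e1 : c + (d + 1) + 1 = (c + 1) + (d + 1) := by ring
    have e2 : qBinom q (c + (d + 1)) (c + 1) = qBinom q ((c + 1) + d) (c + 1) := by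
      congr 1; ring
    rw [e1, e2, qBinom_add, qBinom_add, qBinom_add]
    have e3 : c + 1 + (d + 1) = (c + d + 1) + 1 := by ring
    have e4 : c + 1 + d = c + d + 1 := by ring
    have e5 : c + (d + 1) = c + d + 1 := by ring
    rw [e3, e4, e5, qPoch_succ q q (c + d + 1), qPoch_succ q q c, qPoch_succ q q d]
    have h1 := qPoch_ne q hq c
    have h2 := qPoch_ne q hq d
    have h3 := one_sub_ne q hq c
    have h4 := one_sub_ne q hq d
    field_simp
    ring

/-- inner sum -/
noncomputable def innerS (q w : ℂ) (n : ℕ) : ℂ :=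
  ∑ c ∈ Finset.range (n + 1), q ^ (c ^ 2 + c) * w ^ c * qBinom q n c

/-- auxiliary inner sum -/
noncomputable def innerT (q w : ℂ) (n : ℕ) : ℂ :=
  ∑ c ∈ Finset.range (n + 1), q ^ (c ^ 2 + 2 * c) * w ^ c * qBinom q n c

lemma sum_shift (q : ℂ) (hq : ‖q‖ < 1) (n : ℕ) (f : ℕ → ℂ) :
    ∑ c ∈ Finset.range (n + 1), f c * qBinom q n c
      = ∑ c ∈ Finset.range (n + 1), f (c + 1) * qBinom q n (c + 1) + f 0 := by
  have h := Finset.sum_range_succ (fun c => f c * qBinom q n c) (n + 1)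
  rw [Finset.sum_range_succ'] at h
  simp only [qBinom_zero q hq, qBinom_big q n (n + 1) (by omega), mul_zero, add_zero,
    mul_one] at h
  exact h.symm

lemma recA (q w : ℂ) (hq : ‖q‖ < 1) (n : ℕ) :
    innerS q w (n + 1) = innerS q w n + q ^ (n + 2) * w * innerT q w n := by
  unfold innerS innerT
  rw [sum_shift q hq n (fun c => q ^ (c ^ 2 + c) * w ^ c), Finset.sum_range_succ',
    qBinom_zero q hq, Finset.mul_sum, add_right_comm, ← Finset.sum_add_distrib, mul_one]
  congr 1
  apply Finset.sum_congr rfl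
  intro c hc
  have hc : c ≤ n := by simpa [Nat.lt_succ_iff] using hc
  rw [pascal1 q hq n c hc]
  obtain ⟨d, rfl⟩ := Nat.exists_eq_add_of_le hc
  rw [Nat.add_sub_cancel_left]
  ring

lemma recB (q w : ℂ) (hq : ‖q‖ < 1) (n : ℕ) :
    innerS q w (n + 1) = innerT q w n + q ^ 2 * w * innerS q (q ^ 2 * w) n := by
  unfold innerS innerT
  rw [sum_shift q hq n (fun c => q ^ (c ^ 2 + 2 * c) * w ^ c), Finset.sum_range_succ',
    qBinom_zero q hq, Finset.mul_sum, add_right_comm, ← Finset.sum_add_distrib, mul_one]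
  congr 1
  apply Finset.sum_congr rfl
  intro c hc
  have hc : c ≤ n := by simpa [Nat.lt_succ_iff] using hc
  rw [pascal2 q hq n c hc]
  ring

lemma recC (q w : ℂ) (hq : ‖q‖ < 1) (n : ℕ) :
    (1 - q ^ (n + 2) * w) * innerS q w (n + 1) - innerS q w n
      = - q ^ (n + 4) * w ^ 2 * innerS q (q ^ 2 * w) n := by
  linear_combination recA q w hq n - q ^ (n + 2) * w * recB q w hq n

lemma Hfun_eq (q X Y Z : ℂ) :
    Hfun q X Y Z = ∑' n : ℕ, qPoch q X n * Y ^ n * innerS q (Z ^ 2) n := by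
  unfold Hfun innerS
  congr 1
  ext n
  rw [Finset.mul_sum]
  apply Finset.sum_congr rfl
  intro c _
  rw [pow_mul]
  ring

lemma my_geom_le (r : ℝ) (h0 : 0 ≤ r) (h1 : r < 1) (n : ℕ) :
    ∑ i ∈ Finset.range n, r ^ i ≤ (1 - r)⁻¹ := by
  rw [← tsum_geometric_of_lt_one h0 h1]
  exact (summable_geometric_of_lt_one h0 h1).sum_le_tsum _ (fun i _ => pow_nonneg h0 i)

lemma prod_bound (q : ℂ) (hq : ‖q‖ < 1) (C : ℝ) (hC : 0 ≤ C) (u : ℕ → ℂ)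
    (hu : ∀ i, ‖u i‖ ≤ C * ‖q‖ ^ i) (n : ℕ) :
    ‖∏ i ∈ Finset.range n, (1 + u i)‖ ≤ Real.exp (C * (1 - ‖q‖)⁻¹) := by
  rw [norm_prod]
  calc ∏ i ∈ Finset.range n, ‖1 + u i‖ ≤ ∏ i ∈ Finset.range n, Real.exp (C * ‖q‖ ^ i) := by
        apply Finset.prod_le_prod
        · intro i _; positivity
        · intro i _
          have h1 := norm_add_le 1 (u i)
          have h2 := Real.add_one_le_exp (C * ‖q‖ ^ i)
          have h3 := hu i
          simp only [norm_one] at h1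
          linarith
    _ = Real.exp (C * ∑ i ∈ Finset.range n, ‖q‖ ^ i) := by
        rw [← Real.exp_sum, Finset.mul_sum]
    _ ≤ _ := by
        apply Real.exp_le_exp.2
        exact mul_le_mul_of_nonneg_left (my_geom_le _ (norm_nonneg _) hq n) hC

lemma qPoch_bound (q x : ℂ) (hq : ‖q‖ < 1) : ∃ M : ℝ, 0 ≤ M ∧ ∀ n, ‖qPoch q x n‖ ≤ M := by
  refine ⟨Real.exp (‖x‖ * (1 - ‖q‖)⁻¹), (Real.exp_pos _).le, fun n => ?_⟩
  · have := prod_bound q hq ‖x‖ (norm_nonneg _) (fun i => -(x * q ^ i)) (by simp) n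
    simpa [qPoch, sub_eq_add_neg] using this

lemma qPoch_inv_bound (q : ℂ) (hq : ‖q‖ < 1) :
    ∃ M : ℝ, 0 ≤ M ∧ ∀ n, ‖(qPoch q q n)⁻¹‖ ≤ M := by
  have hr : 0 < 1 - ‖q‖ := by linarith
  refine ⟨Real.exp ((1 - ‖q‖)⁻¹ * (1 - ‖q‖)⁻¹), (Real.exp_pos _).le, fun n => ?_⟩
  · have := prod_bound q hq (1 - ‖q‖)⁻¹ (by positivity)
      (fun i => q * q ^ i / (1 - q * q ^ i)) (fun i => ?_) n
    · convert this using 2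
      rw [qPoch, ← Finset.prod_inv_distrib]
      apply Finset.prod_congr rfl
      intro i _
      have := one_sub_ne q hq i
      field_simp
      ring
    · rw [norm_div, norm_mul, norm_pow, div_eq_mul_inv, mul_comm]
      have h1 : 1 - ‖q‖ ≤ ‖1 - q * q ^ i‖ := by
        have h2 := norm_sub_norm_le (1 : ℂ) (q * q ^ i)
        have h3 : ‖q * q ^ i‖ ≤ ‖q‖ := by
          rw [norm_mul, norm_pow]
          exact mul_le_of_le_one_right (norm_nonneg _) (pow_le_one₀ (norm_nonneg _) hq.le)
        simp only [norm_one] at h2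
        linarith
      have h4 : ‖q‖ * ‖q‖ ^ i ≤ ‖q‖ ^ i :=
        mul_le_of_le_one_left (by positivity) hq.le
      gcongr

lemma summ_gauss (r W : ℝ) (h0 : 0 ≤ r) (h1 : r < 1) (hW : 0 ≤ W) :
    Summable fun c : ℕ => r ^ (c ^ 2 + c) * W ^ c := by
  have ht : Filter.Tendsto (fun c : ℕ => r ^ (c + 1) * W) Filter.atTop (nhds 0) := by
    have := ((tendsto_pow_atTop_nhds_zero_of_lt_one h0 h1).comp
      (Filter.tendsto_add_atTop_nat 1)).mul_const W
    simpa using this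
  have he := ht.eventually (gt_mem_nhds (show (0 : ℝ) < 1 / 2 by norm_num))
  apply Summable.of_norm_bounded_eventually_nat
    (summable_geometric_of_lt_one (by norm_num) (by norm_num : (1 / 2 : ℝ) < 1))
  filter_upwards [he] with c hc
  have : r ^ (c ^ 2 + c) * W ^ c = (r ^ (c + 1) * W) ^ c := by
    rw [mul_pow, ← pow_mul]; congr 2; ring
  rw [this, Real.norm_of_nonneg (by positivity)]
  gcongr

lemma innerS_bound (q w : ℂ) (hq : ‖q‖ < 1) : ∃ M : ℝ, 0 ≤ M ∧ ∀ n, ‖innerS q w n‖ ≤ M := by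
  obtain ⟨A, hA, hA'⟩ := qPoch_bound q q hq
  obtain ⟨B, hB, hB'⟩ := qPoch_inv_bound q hq
  have hs := summ_gauss ‖q‖ ‖w‖ (norm_nonneg _) hq (norm_nonneg _)
  have hG : ∀ n c, ‖qBinom q n c‖ ≤ A * (B * B) := by
    intro n c
    unfold qBinom
    split_ifs
    · rw [div_eq_mul_inv, mul_inv, norm_mul, norm_mul]
      gcongr
      · exact hA' n
      · exact hB' _
      · exact hB' _
    · simp; positivity
  refine ⟨(∑' c : ℕ, ‖q‖ ^ (c ^ 2 + c) * ‖w‖ ^ c) * (A * (B * B)),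
    mul_nonneg (tsum_nonneg fun c => by positivity) (by positivity), fun n => ?_⟩
  calc ‖innerS q w n‖ ≤ ∑ c ∈ Finset.range (n + 1),
        ‖q‖ ^ (c ^ 2 + c) * ‖w‖ ^ c * (A * (B * B)) := by
        apply norm_sum_le_of_le
        intro c _
        rw [norm_mul, norm_mul, norm_pow, norm_pow]
        gcongr
        exact hG n c
    _ ≤ _ := by
        rw [← Finset.sum_mul]
        gcongr
        exact hs.sum_le_tsum _ (fun i _ => by positivity)

lemma summ_H (q x y w : ℂ) (hq : ‖q‖ < 1) (hy : ‖y‖ < 1) :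
    Summable fun n : ℕ => qPoch q x n * y ^ n * innerS q w n := by
  obtain ⟨A, hA, hA'⟩ := qPoch_bound q x hq
  obtain ⟨B, hB, hB'⟩ := innerS_bound q w hq
  apply Summable.of_norm_bounded (g := fun n => A * ‖y‖ ^ n * B)
    (((summable_geometric_of_lt_one (norm_nonneg _) hy).mul_left A).mul_right B)
  intro n
  rw [norm_mul, norm_mul, norm_pow]
  gcongr
  · exact hA' n
  · exact hB' n

theorem stmt_1 (q x y z : ℂ) (hq : ‖q‖ < 1) (hy : ‖y‖ < 1) :
    (x * y - q * z ^ 2) * Hfun q x (q * y) z + (1 - y) * Hfun q x y z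
      = -q ^ 4 * (1 - x) * y * z ^ 4 * Hfun q (q * x) (q * y) (q * z) + 1 - q * z ^ 2 := by
  have hqy : ‖q * y‖ < 1 := by
    rw [norm_mul]
    exact mul_lt_one_of_nonneg_of_lt_one_left (norm_nonneg _) hq hy.le
  simp only [Hfun_eq]
  have s1 := summ_H q x (q * y) (z ^ 2) hq hqy
  have s2 := summ_H q x y (z ^ 2) hq hy
  have s3 := summ_H q (q * x) (q * y) ((q * z) ^ 2) hq hqy
  have t1 := s1.tsum_eq_zero_add
  have t2 := s2.tsum_eq_zero_add
  have s1' := (summable_nat_add_iff 1).2 s1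
  have s2' := (summable_nat_add_iff 1).2 s2
  have z1 : ∀ Y w : ℂ, qPoch q x 0 * Y ^ 0 * innerS q w 0 = 1 := by
    intro Y w
    simp [innerS, qBinom_zero q hq, qPoch]
  rw [z1] at t1 t2
  have key := (((((s1.hasSum.mul_left (x * y)).sub (s1'.hasSum.mul_left (q * z ^ 2))).add
    s2'.hasSum).sub (s2.hasSum.mul_left y)).add
    (s3.hasSum.mul_left (q ^ 4 * (1 - x) * y * z ^ 4)))
  have hz : ∀ n : ℕ, x * y * (qPoch q x n * (q * y) ^ n * innerS q (z ^ 2) n)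
      - q * z ^ 2 * (qPoch q x (n + 1) * (q * y) ^ (n + 1) * innerS q (z ^ 2) (n + 1))
      + qPoch q x (n + 1) * y ^ (n + 1) * innerS q (z ^ 2) (n + 1)
      - y * (qPoch q x n * y ^ n * innerS q (z ^ 2) n)
      + q ^ 4 * (1 - x) * y * z ^ 4 *
        (qPoch q (q * x) n * (q * y) ^ n * innerS q ((q * z) ^ 2) n) = 0 := by
    intro n
    have r := recC q (z ^ 2) hq n
    have p1 := qPoch_succ q x n
    have p2 := qPoch_succ_left q x n
    rw [← mul_pow q z 2] at r
    simp only [mul_pow q y]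
    linear_combination (qPoch q x (n + 1) * y ^ (n + 1)) * r
      + (y ^ (n + 1) * innerS q (z ^ 2) n) * p1
      - (q ^ (n + 4) * y ^ (n + 1) * z ^ 4 * innerS q ((q * z) ^ 2) n) * p2
  have k0 := key.unique (by simpa only [hz] using (hasSum_zero : HasSum (fun _ : ℕ => (0:ℂ)) 0))
  linear_combination k0 - q * z ^ 2 * t1 + t2
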